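/- For each n ∈ ℕ, let Mₙ be the Nmatrix with truth values V = {a₀, …, aₙ, 1}, designated set D = {1}, and interpretation ⊞ₙ given by: ⊞ₙ(1,x) = ⊞ₙ(x,1) = {1, x} for every x ∈ V; ⊞ₙ(a₀,aₙ) = ⊞ₙ(aₙ,a₀) = {1, a₀}; and ⊞ₙ(aᵢ,aⱼ) = {a_{max(0, min(i,j)−1)}} for all other pairs (i.e. when {i,j} ≠ {0,n}). Then: (i) {p, q} ⊢_{Mₙ} p⊞q; (ii) {⊞ᵏ(p)} ⊢_{Mₙ} p for every k ≤ n; and (iii) {⊞^{n+1}(p)} ⊬_{Mₙ} p. -/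

import Mathlib

/-- Formulas built from countably many propositional variables with a single
binary connective `⊞` (platypus). -/
inductive Fm : Type where
  | var : ℕ → Fm
  | pl : Fm → Fm → Fm
deriving DecidableEq

namespace Fm

/-- The set of propositional variables occurring in a formula. -/
def vars : Fm → Set ℕ
  | var n => {n}
  | pl a b => vars a ∪ vars b

/-- A `𝔅_⊞`-valuation: a two-valued function such that
`v (φ ⊞ ψ) ∈ {min (v φ) (v ψ), max (v φ) (v ψ)}`. -/
def IsVal (v : Fm → Bool) : Prop :=
  ∀ a b : Fm, v (a.pl b) = (v a && v b) ∨ v (a.pl b) = (v a || v b)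

/-- The multiple-conclusion consequence `Γ ⊩_⊞ Δ`. -/
def Mc (Γ Δ : Set Fm) : Prop :=
  ∀ v : Fm → Bool, IsVal v → (∀ φ ∈ Γ, v φ = true) → ∃ ψ ∈ Δ, v ψ = true

/-- The single-conclusion consequence `Γ ⊢_⊞ φ`. -/
def Sc (Γ : Set Fm) (φ : Fm) : Prop := Mc Γ {φ}

end Fm

namespace Fm

/-- Iterated platypus: `⊞⁰(φ) = φ`, `⊞^{k+1}(φ) = (⊞ᵏ(φ)) ⊞ φ`. -/
def iter (φ : Fm) : ℕ → Fm
  | 0 => φ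
  | n + 1 => (iter φ n).pl φ

/-- An `M`-valuation for an Nmatrix `⟨V, op, D⟩` with `op : V → V → ℘(V)∖{∅}`. -/
def IsNVal {V : Type} (op : V → V → Set V) (v : Fm → V) : Prop :=
  ∀ a b : Fm, v (a.pl b) ∈ op (v a) (v b)

/-- The single-conclusion consequence `Γ ⊢_M φ` of an Nmatrix. -/
def NSc {V : Type} (op : V → V → Set V) (D : Set V) (Γ : Set Fm) (φ : Fm) : Prop :=
  ∀ v : Fm → V, IsNVal op v → (∀ ψ ∈ Γ, v ψ ∈ D) → v φ ∈ D

/-- The interpretation `⊞ₙ` of the Nmatrix `Mₙ`: truth values are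
`Fin (n+2)`, where `⟨i, _⟩` with `i ≤ n` is `aᵢ` and `Fin.last (n+1)` is the
designated value `1`.  `⊞ₙ(1,x) = ⊞ₙ(x,1) = {1,x}`;
`⊞ₙ(a₀,aₙ) = ⊞ₙ(aₙ,a₀) = {1,a₀}`; otherwise
`⊞ₙ(aᵢ,aⱼ) = {a_{max(0, min i j − 1)}}`. -/
def opM (n : ℕ) (x y : Fin (n + 2)) : Set (Fin (n + 2)) :=
  if x = Fin.last (n + 1) then {Fin.last (n + 1), y}
  else if y = Fin.last (n + 1) then {Fin.last (n + 1), x}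
  else if (x.val = 0 ∧ y.val = n) ∨ (x.val = n ∧ y.val = 0) then
    {Fin.last (n + 1), ⟨0, by omega⟩}
  else {⟨min x.val y.val - 1, by have := x.isLt; omega⟩}

end Fm

/-!
Starting from an undesignated value `aᵢ`, each further application of `· ⊞ φ` lowers the index by
one until it reaches `0`, because the exceptional pair `(a₀, aₙ)` cannot arise among the first `n`
steps. Hence `⊞ᵏ(φ)` stays undesignated for `k ≤ n`. Starting from `aₙ`, step `n` arrives
exactly at `a₀`, so the next step evaluates `a₀ ⊞ aₙ` and is free to take the value `1`.
-/

namespace Fm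

section Nmatrix

variable {V : Type} {op : V → V → Set V}

/-- The evaluation of formulas in the algebra `⟨V, f⟩` under the assignment `ρ` of the variables.
When `f` selects a value from each entry of the table of an Nmatrix, it is a valuation of that
Nmatrix. -/
def eval (f : V → V → V) (ρ : ℕ → V) : Fm → V
  | var p => ρ p
  | pl a b => f (eval f ρ a) (eval f ρ b)

theorem isNVal_eval {f : V → V → V} (hf : ∀ x y, f x y ∈ op x y) (ρ : ℕ → V) :
    IsNVal op (eval f ρ) :=
  fun _ _ => hf _ _

theorem exists_isNVal_pl_eq (hop : ∀ x y, (op x y).Nonempty) (ρ : ℕ → V) {x₀ y₀ z : V}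
    (hz : z ∈ op x₀ y₀) :
    ∃ v, IsNVal op v ∧ (∀ p, v (var p) = ρ p) ∧
      ∀ φ ψ, v φ = x₀ → v ψ = y₀ → v (φ.pl ψ) = z := by
  classical
  choose g hg using hop
  let f : V → V → V := fun x y => if x = x₀ ∧ y = y₀ then z else g x y
  have hf : ∀ x y, f x y ∈ op x y := by
    intro x y
    dsimp only [f]
    split_ifs with hxy
    · rwa [hxy.1, hxy.2]
    · exact hg x y
  exact ⟨eval f ρ, isNVal_eval hf ρ, fun _ => rfl, fun _ _ hφ hψ => if_pos ⟨hφ, hψ⟩⟩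

end Nmatrix

variable {n : ℕ}

theorem opM_nonempty (x y : Fin (n + 2)) : (opM n x y).Nonempty := by
  unfold opM
  split_ifs <;> simp

theorem opM_last_last : opM n (Fin.last (n + 1)) (Fin.last (n + 1)) = {Fin.last (n + 1)} := by
  simp [opM]

theorem last_mem_opM_zero_castSucc_last :
    Fin.last (n + 1) ∈ opM n 0 (Fin.last n).castSucc := by
  simp [opM]

theorem val_eq_of_mem_opM {x y z : Fin (n + 2)} (hx : x ≠ Fin.last (n + 1))
    (hy : y ≠ Fin.last (n + 1))
    (hxy : ¬((x.val = 0 ∧ y.val = n) ∨ (x.val = n ∧ y.val = 0))) (hz : z ∈ opM n x y) :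
    z.val = min x.val y.val - 1 := by
  rw [opM, if_neg hx, if_neg hy, if_neg hxy, Set.mem_singleton_iff] at hz
  exact congrArg Fin.val hz

theorem val_iter_of_ne_last {v : Fm → Fin (n + 2)} (hv : IsNVal (opM n) v) {φ : Fm}
    (hφ : v φ ≠ Fin.last (n + 1)) {k : ℕ} (hk : k ≤ n) :
    (v (φ.iter k)).val = (v φ).val - k := by
  have hφ_lt : (v φ).val < n + 1 := Fin.val_lt_last hφ
  induction k with
  | zero => rfl
  | succ k ih =>
    have hval : (v (φ.iter k)).val = (v φ).val - k := ih (by lia)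
    have hiter : v (φ.iter k) ≠ Fin.last (n + 1) := Fin.ne_of_val_ne (by rw [Fin.val_last]; lia)
    calc (v (φ.iter (k + 1))).val
        = min (v (φ.iter k)).val (v φ).val - 1 :=
          val_eq_of_mem_opM hiter hφ (by lia) (hv (φ.iter k) φ)
      _ = (v φ).val - (k + 1) := by lia

theorem nsc_opM_pl (φ ψ : Fm) : NSc (opM n) {Fin.last (n + 1)} {φ, ψ} (φ.pl ψ) := by
  intro v hv hΓ
  have hφ : v φ = Fin.last (n + 1) := hΓ φ (Set.mem_insert φ {ψ})
  have hψ : v ψ = Fin.last (n + 1) := hΓ ψ (Set.mem_insert_of_mem φ rfl)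
  simpa only [hφ, hψ, opM_last_last] using hv φ ψ

theorem nsc_opM_of_iter (φ : Fm) {k : ℕ} (hk : k ≤ n) :
    NSc (opM n) {Fin.last (n + 1)} {φ.iter k} φ := by
  intro v hv hΓ
  by_contra hφ
  have hiter : v (φ.iter k) = Fin.last (n + 1) := hΓ _ rfl
  have hval : n + 1 = (v φ).val - k := by
    simpa only [hiter, Fin.val_last] using val_iter_of_ne_last hv hφ hk
  have hφ_lt : (v φ).val < n + 1 := Fin.val_lt_last hφ
  lia

theorem not_nsc_opM_of_iter_succ (p : ℕ) :
    ¬NSc (opM n) {Fin.last (n + 1)} {(var p).iter (n + 1)} (var p) := by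
  intro h
  obtain ⟨v, hv, hvar, hpl⟩ := exists_isNVal_pl_eq opM_nonempty
    (fun _ => (Fin.last n).castSucc) last_mem_opM_zero_castSucc_last
  have hp : v (var p) ≠ Fin.last (n + 1) := by
    rw [hvar]
    exact Fin.castSucc_ne_last _
  have hiter : v ((var p).iter n) = 0 :=
    Fin.ext (by simp [val_iter_of_ne_last hv hp le_rfl, hvar])
  have hiter_succ : v ((var p).iter (n + 1)) = Fin.last (n + 1) := hpl _ _ hiter (hvar p)
  exact hp (h v hv (by rintro _ rfl; exact hiter_succ))

end Fm

open Fm in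
/-- in the Nmatrix `Mₙ = ⟨{a₀,…,aₙ,1}, ⊞ₙ, {1}⟩`:
(i) `{p, q} ⊢_{Mₙ} p ⊞ q`; (ii) `{⊞ᵏ(p)} ⊢_{Mₙ} p` for every `k ≤ n`;
(iii) `{⊞^{n+1}(p)} ⊬_{Mₙ} p`. -/
theorem platypus_matrix_Mn (n : ℕ) :
    (∀ p q : ℕ, p ≠ q →
      NSc (opM n) {Fin.last (n + 1)} {Fm.var p, Fm.var q}
        ((Fm.var p).pl (Fm.var q))) ∧
    (∀ (p : ℕ) (k : ℕ), k ≤ n →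
      NSc (opM n) {Fin.last (n + 1)} {(Fm.var p).iter k} (Fm.var p)) ∧
    (∀ p : ℕ,
      ¬ NSc (opM n) {Fin.last (n + 1)} {(Fm.var p).iter (n + 1)} (Fm.var p)) := by
  exact ⟨fun p q _ => nsc_opM_pl (var p) (var q), fun p _ hk => nsc_opM_of_iter (var p) hk,
    not_nsc_opM_of_iter_succ⟩
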